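/- Let N ≥ 2, κ > 0, and δ > 0. Then for every x ∈ ℝ^N, max_i x_i ≤ ψ(x,−δ) ≤ max_i x_i + 2√(κδ/π) · (N−1)/N, where ψ(x,−δ) = (1/N) Σ_{i=1}^N x_{(i)} + √(2κδ) Σ_{l=1}^{N−1} c_l f(z_l) with z_l = (Σ_{n=1}^l x_{(n)} − l x_{(l+1)})/√(2κδ). -/

import Mathlib

open MeasureTheory Real

/-- The error function `erf(y) = (2/√π) ∫_0^y e^{-s²} ds`. -/
noncomputable def erf (y : ℝ) : ℝ :=
  (2 / Real.sqrt Real.pi) * ∫ s in (0 : ℝ)..y, Real.exp (-s ^ 2)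

/-- `f(z) = √(2/π) e^(-z²/2) + z · erf(z/√2)`. -/
noncomputable def fAux (z : ℝ) : ℝ :=
  Real.sqrt (2 / Real.pi) * Real.exp (-z ^ 2 / 2) + z * erf (z / Real.sqrt 2)

/-- `ranked x l` is the `l`-th largest coordinate `x_{(l)}` of `x` (1-based index). -/
noncomputable def ranked {N : ℕ} (x : Fin N → ℝ) (l : ℕ) : ℝ :=
  if h : l - 1 < N then x (Tuple.sort x (Fin.rev ⟨l - 1, h⟩)) else 0

/-- The max potential
`ψ(x,t) = (1/N) Σ_i x_{(i)} + √(-2κt) Σ_{l=1}^{N-1} c_l f(z_l)` with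
`c_l = 1/(l(l+1))` and `z_l = (Σ_{n=1}^l x_{(n)} - l x_{(l+1)})/√(-2κt)`. -/
noncomputable def maxPot (N : ℕ) (κ : ℝ) (x : Fin N → ℝ) (t : ℝ) : ℝ :=
  (1 / (N : ℝ)) * ∑ i ∈ Finset.Icc 1 N, ranked x i +
    Real.sqrt (-2 * κ * t) * ∑ l ∈ Finset.Icc 1 (N - 1),
      (1 / ((l : ℝ) * ((l : ℝ) + 1))) *
        fAux (((∑ n ∈ Finset.Icc 1 l, ranked x n) - (l : ℝ) * ranked x (l + 1)) /
          Real.sqrt (-2 * κ * t))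

/-!
Write `s = √(-2κt)`, and let `z_l`, `c_l`, `f` be as in the definition of `ψ = maxPot`. Then
`c_l s z_l` is the mean of the `l` largest coordinates minus the mean of the `l + 1` largest ones,
so `∑ c_l s z_l` telescopes to the maximum minus the overall mean, and
`ψ(x, t) - max x = s ∑ c_l (f(z_l) - z_l)`. Each `f(z_l) - z_l` lies in `[0, √(2/π)]`: the lower
bound is the Gaussian tail estimate `2y ∫_y^∞ e^{-u²} du ≤ e^{-y²}` at `y = z_l/√2`, the upper one
follows from `erf ≤ 1` and `z_l ≥ 0`. Finally `∑ c_l = 1 - 1/N`.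
-/

section GaussianTail

variable {b : ℝ}

lemma integral_Ioi_two_mul_mul_exp_neg_mul_sq (hb : 0 < b) (y : ℝ) :
    ∫ s in Set.Ioi y, 2 * b * (s * exp (-b * s ^ 2)) = exp (-b * y ^ 2) := by
  have hderiv (s : ℝ) :
      HasDerivAt (fun s ↦ -exp (-b * s ^ 2)) (2 * b * (s * exp (-b * s ^ 2))) s :=
    ((hasDerivAt_pow 2 s).const_mul (-b)).exp.fun_neg.congr_deriv (by push_cast; ring)
  have hlim : Filter.Tendsto (fun s ↦ -exp (-b * s ^ 2)) Filter.atTop (nhds 0) := by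
    have hexponent : Filter.Tendsto (fun s : ℝ ↦ -b * s ^ 2) Filter.atTop Filter.atBot :=
      (Filter.tendsto_pow_atTop two_ne_zero).const_mul_atTop_of_neg (neg_neg_of_pos hb)
    simpa using (tendsto_exp_atBot.comp hexponent).neg
  have hint : Integrable fun s ↦ 2 * b * (s * exp (-b * s ^ 2)) :=
    (integrable_mul_exp_neg_mul_sq hb).const_mul _
  simpa using integral_Ioi_of_hasDerivAt_of_tendsto' (fun s _ ↦ hderiv s) hint.integrableOn hlim

lemma two_mul_mul_integral_Ioi_exp_neg_mul_sq_le (hb : 0 < b) (y : ℝ) :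
    2 * b * y * ∫ s in Set.Ioi y, exp (-b * s ^ 2) ≤ exp (-b * y ^ 2) := by
  rw [← integral_Ioi_two_mul_mul_exp_neg_mul_sq hb, ← integral_const_mul]
  refine setIntegral_mono_on ((integrable_exp_neg_mul_sq hb).const_mul _).integrableOn
    ((integrable_mul_exp_neg_mul_sq hb).const_mul _).integrableOn measurableSet_Ioi
    fun s (hs : y < s) ↦ ?_
  rw [mul_assoc (2 * b)]
  gcongr

end GaussianTail

section Erf

lemma erf_eq_one_sub_integral_Ioi (y : ℝ) :
    erf y = 1 - 2 / √π * ∫ s in Set.Ioi y, exp (-s ^ 2) := by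
  have hint : Integrable fun s : ℝ ↦ exp (-s ^ 2) := by
    simpa using integrable_exp_neg_mul_sq one_pos
  have hhalf : ∫ s in Set.Ioi (0 : ℝ), exp (-s ^ 2) = √π / 2 := by
    simpa using integral_gaussian_Ioi 1
  have hsplit := intervalIntegral.integral_interval_add_Ioi (a := 0) (b := y)
    hint.integrableOn hint.integrableOn
  rw [erf, eq_sub_of_add_eq (hsplit.trans hhalf), mul_sub, div_mul_div_cancel₀ (by positivity),
    div_self two_ne_zero]

lemma erf_le_one (y : ℝ) : erf y ≤ 1 := by
  rw [erf_eq_one_sub_integral_Ioi]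
  exact sub_le_self _ (by positivity)

lemma fAux_sqrt_two_mul (y : ℝ) :
    fAux (√2 * y) =
      √2 * y + √(2 / π) * (exp (-y ^ 2) - 2 * y * ∫ s in Set.Ioi y, exp (-s ^ 2)) := by
  have hexponent : -(√2 * y) ^ 2 / 2 = -y ^ 2 := by
    rw [mul_pow, sq_sqrt zero_le_two]
    ring
  rw [fAux, hexponent, mul_div_cancel_left₀ _ (by positivity), erf_eq_one_sub_integral_Ioi,
    sqrt_div zero_le_two]
  ring

lemma le_fAux (z : ℝ) : z ≤ fAux z := by
  obtain ⟨y, rfl⟩ : ∃ y, z = √2 * y := ⟨z / √2, by field_simp⟩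
  have htail : 2 * y * ∫ s in Set.Ioi y, exp (-s ^ 2) ≤ exp (-y ^ 2) := by
    simpa using two_mul_mul_integral_Ioi_exp_neg_mul_sq_le one_pos y
  rw [fAux_sqrt_two_mul]
  exact le_add_of_nonneg_right (mul_nonneg (by positivity) (sub_nonneg.2 htail))

lemma fAux_le_add_sqrt {z : ℝ} (hz : 0 ≤ z) : fAux z ≤ z + √(2 / π) := by
  have hexp : exp (-z ^ 2 / 2) ≤ 1 := exp_le_one_iff.2 (by linarith [sq_nonneg z])
  rw [add_comm, fAux]
  exact add_le_add (mul_le_of_le_one_right (by positivity) hexp)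
    (mul_le_of_le_one_right hz (erf_le_one _))

end Erf

section PrefixGap

/-- The gap `∑_{n=1}^l r_n - l r_{l+1}` between the sum of the first `l` terms of a sequence
(indexed from `1`) and `l` copies of the next one. For `r = ranked x` it is the numerator of
`z_l`. -/
def prefixGap {R : Type*} [Ring R] (r : ℕ → R) (l : ℕ) : R :=
  ∑ n ∈ Finset.Icc 1 l, r n - l * r (l + 1)

lemma prefixGap_nonneg {R : Type*} [Ring R] [PartialOrder R] [IsOrderedRing R] {r : ℕ → R}
    {l : ℕ} (hr : AntitoneOn r (Set.Icc 1 (l + 1))) : 0 ≤ prefixGap r l := by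
  have hle : ∀ n ∈ Finset.Icc 1 l, r (l + 1) ≤ r n := fun n hn ↦ by
    obtain ⟨h1n, hnl⟩ := Finset.mem_Icc.1 hn
    exact hr ⟨h1n, by lia⟩ ⟨by lia, le_rfl⟩ (by lia)
  simpa [prefixGap] using Finset.card_nsmul_le_sum _ _ _ hle

variable {K : Type*} [Field K] [CharZero K]

lemma mean_sub_mean_succ_eq_prefixGap (r : ℕ → K) {l : ℕ} (hl : l ≠ 0) :
    1 / (l : K) * ∑ i ∈ Finset.Icc 1 l, r i -
        1 / ((l + 1 : ℕ) : K) * ∑ i ∈ Finset.Icc 1 (l + 1), r i =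
      1 / ((l : K) * (l + 1)) * prefixGap r l := by
  rw [prefixGap, Finset.sum_Icc_succ_top (by lia)]
  have hsucc : (l : K) + 1 ≠ 0 := l.cast_add_one_ne_zero
  push_cast
  field_simp
  ring

lemma mean_add_sum_prefixGap (r : ℕ → K) {N : ℕ} (hN : 1 ≤ N) :
    1 / (N : K) * ∑ i ∈ Finset.Icc 1 N, r i +
      ∑ l ∈ Finset.Ico 1 N, 1 / ((l : K) * (l + 1)) * prefixGap r l = r 1 := by
  induction N, hN using Nat.le_induction with
  | base => simp
  | succ N hN ih =>
    rw [Finset.sum_Ico_succ_top hN, ← mean_sub_mean_succ_eq_prefixGap r (by lia)]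
    linear_combination ih

lemma sum_one_div_mul_succ {N : ℕ} (hN : 1 ≤ N) :
    ∑ l ∈ Finset.Ico 1 N, 1 / ((l : K) * (l + 1)) = 1 - 1 / N := by
  induction N, hN using Nat.le_induction with
  | base => simp
  | succ N hN ih =>
    have hsucc : (N : K) + 1 ≠ 0 := N.cast_add_one_ne_zero
    have hN0 : (N : K) ≠ 0 := Nat.cast_ne_zero.2 (by lia)
    rw [Finset.sum_Ico_succ_top hN, ih]
    push_cast
    field_simp
    ring

end PrefixGap

section Ranked

variable {N : ℕ} (x : Fin N → ℝ)

lemma antitoneOn_ranked : AntitoneOn (ranked x) (Set.Icc 1 N) := by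
  rintro a - b ⟨hb1, hbN⟩ hab
  rw [ranked, ranked, dif_pos (by lia), dif_pos (by lia)]
  exact Tuple.monotone_sort x (Fin.rev_le_rev.2 (Nat.sub_le_sub_right hab 1))

lemma ranked_one_eq_iSup (hN : 0 < N) : ranked x 1 = ⨆ i, x i := by
  have : Nonempty (Fin N) := ⟨⟨0, hN⟩⟩
  rw [ranked, dif_pos hN]
  refine le_antisymm (le_ciSup (Set.finite_range x).bddAbove _) (ciSup_le fun i ↦ ?_)
  have hle : (Tuple.sort x).symm i ≤ Fin.rev ⟨0, hN⟩ := by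
    rw [Fin.le_def, Fin.val_rev]
    lia
  simpa using Tuple.monotone_sort x hle

end Ranked

section MaxPot

variable {N : ℕ} {κ t : ℝ} (x : Fin N → ℝ)

lemma maxPot_eq_iSup_add (hN : 0 < N) (ht : κ * t < 0) :
    maxPot N κ x t = (⨆ i, x i) + √(-2 * κ * t) * ∑ l ∈ Finset.Ico 1 N,
      1 / ((l : ℝ) * (l + 1)) * (fAux (prefixGap (ranked x) l / √(-2 * κ * t)) -
        prefixGap (ranked x) l / √(-2 * κ * t)) := by
  have hs : √(-2 * κ * t) ≠ 0 := (sqrt_pos.2 (by linarith)).ne'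
  have hrescale : √(-2 * κ * t) * ∑ l ∈ Finset.Ico 1 N,
      1 / ((l : ℝ) * (l + 1)) * (prefixGap (ranked x) l / √(-2 * κ * t)) =
        ∑ l ∈ Finset.Ico 1 N, 1 / ((l : ℝ) * (l + 1)) * prefixGap (ranked x) l := by
    rw [Finset.mul_sum]
    exact Finset.sum_congr rfl fun l _ ↦ by rw [mul_left_comm, mul_div_cancel₀ _ hs]
  simp only [mul_sub, Finset.sum_sub_distrib]
  rw [hrescale, ← ranked_one_eq_iSup x hN, ← mean_add_sum_prefixGap (ranked x) hN, maxPot,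
    Finset.Icc_sub_one_right_eq_Ico_of_not_isMin (by simpa using hN.ne')]
  simp only [prefixGap]
  ring

lemma iSup_le_maxPot (hN : 0 < N) (ht : κ * t < 0) : ⨆ i, x i ≤ maxPot N κ x t := by
  rw [maxPot_eq_iSup_add x hN ht]
  refine le_add_of_nonneg_right (mul_nonneg (sqrt_nonneg _) (Finset.sum_nonneg fun l _ ↦ ?_))
  exact mul_nonneg (by positivity) (sub_nonneg.2 (le_fAux _))

lemma maxPot_le_iSup_add (hN : 0 < N) (ht : κ * t < 0) :
    maxPot N κ x t ≤ (⨆ i, x i) + √(-2 * κ * t) * ((1 - 1 / N) * √(2 / π)) := by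
  rw [maxPot_eq_iSup_add x hN ht, ← sum_one_div_mul_succ hN, Finset.sum_mul]
  gcongr with l hl
  have hgap : 0 ≤ prefixGap (ranked x) l := prefixGap_nonneg <|
    (antitoneOn_ranked x).mono <| Set.Icc_subset_Icc_right (Finset.mem_Ico.1 hl).2
  exact sub_le_iff_le_add'.2 (fAux_le_add_sqrt (by positivity))

end MaxPot

lemma sqrt_two_mul_mul_sqrt_two_div_pi (a : ℝ) : √(2 * a) * √(2 / π) = 2 * √(a / π) := by
  rw [sqrt_mul zero_le_two, sqrt_div zero_le_two, sqrt_div' _ pi_nonneg]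
  linear_combination √a / √π * mul_self_sqrt (zero_le_two (α := ℝ))

theorem maxPot_final_time_bound
    (N : ℕ) (hN : 2 ≤ N) (κ δ : ℝ) (hκ : 0 < κ) (hδ : 0 < δ) :
    ∀ x : Fin N → ℝ,
      (⨆ i, x i) ≤ maxPot N κ x (-δ) ∧
        maxPot N κ x (-δ) ≤
          (⨆ i, x i) + 2 * Real.sqrt (κ * δ / Real.pi) * ((N : ℝ) - 1) / (N : ℝ) := by
  intro x
  have hN0 : 0 < N := by lia
  have ht : κ * -δ < 0 := mul_neg_of_pos_of_neg hκ (neg_neg_of_pos hδ)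
  refine ⟨iSup_le_maxPot x hN0 ht, (maxPot_le_iSup_add x hN0 ht).trans_eq ?_⟩
  congr 1
  calc √(-2 * κ * -δ) * ((1 - 1 / N) * √(2 / π))
      = √(2 * (κ * δ)) * √(2 / π) * (1 - 1 / N) := by ring_nf
    _ = 2 * √(κ * δ / π) * ((N : ℝ) - 1) / N := by
      rw [sqrt_two_mul_mul_sqrt_two_div_pi]
      field_simp
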